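/- Let ρ be a weak ψ-Gibbs measure with respect to a non-trivial C¹-IFS (with or without overlaps). Then for every q ∈ (0,1], the L^q-spectrum β_ρ(q) exists as a limit, i.e. the sequence (1/(n log 2)) log Σ_{C∈D_n} ρ(C)^q converges as n → ∞. -/

import Mathlib

open MeasureTheory Set Filter Topology
open scoped ENNReal NNReal Classical

noncomputable section

namespace Symb

/-- Finite words over the alphabet `{1,…,N}`. -/
abbrev Word (N : ℕ) := List (Fin N)

/-- The sequence space `I^ℕ`. -/
abbrev SeqSp (N : ℕ) := ℕ → Fin N

variable {N : ℕ}

/-- The shift map on `I^ℕ`. -/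
def shift (x : SeqSp N) : SeqSp N := fun k => x (k + 1)

/-- The cylinder set `[w]` of a finite word `w`. -/
def cylinder (w : Word N) : Set (SeqSp N) := {x | ∀ i : Fin w.length, x i = w.get i}

/-- Concatenation `w x` of a finite word with an infinite sequence. -/
def cat (w : Word N) (x : SeqSp N) : SeqSp N := fun k =>
  if h : k < w.length then w.get ⟨k, h⟩ else x (k - w.length)

/-- Birkhoff sum `S_m f(x) = Σ_{k<m} f(σ^k x)`. -/
def birkhoff (f : SeqSp N → ℝ) (m : ℕ) (x : SeqSp N) : ℝ :=
  ∑ k ∈ Finset.range m, f (shift^[k] x)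

/-- `S_w f = sup_{x ∈ [w]} S_{|w|} f(x)`. -/
def supBirkhoff (f : SeqSp N → ℝ) (w : Word N) : ℝ :=
  sSup (birkhoff f w.length '' cylinder w)

/-- `s_w f = inf_{x ∈ [w]} S_{|w|} f(x)`. -/
def infBirkhoff (f : SeqSp N → ℝ) (w : Word N) : ℝ :=
  sInf (birkhoff f w.length '' cylinder w)

/-- `Σ_{w ∈ Iᵐ} exp (S_w f)`. -/
def partSum (f : SeqSp N → ℝ) (m : ℕ) : ℝ :=
  ∑ v : Fin m → Fin N, Real.exp (supBirkhoff f (List.ofFn v))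

/-- The topological pressure `P(f) = lim_m (1/m) log Σ_{w ∈ Iᵐ} exp(S_w f)`
(defined via `limsup`; for continuous `f` the limit exists). -/
def pressure (f : SeqSp N → ℝ) : ℝ :=
  Filter.limsup (fun m => Real.log (partSum f m) / m) Filter.atTop

/-- `var_k(f)`, the `k`-th variation of `f`. -/
def varn (f : SeqSp N → ℝ) (k : ℕ) : ℝ :=
  sSup {d | ∃ x y : SeqSp N, (∀ i < k, x i = y i) ∧ d = |f x - f y|}

/-- The Perron–Frobenius (transfer) operator `L_ψ f(x) = Σ_{σ y = x} e^{ψ(y)} f(y)`. -/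
def transfer (ψ f : SeqSp N → ℝ) (x : SeqSp N) : ℝ :=
  ∑ j : Fin N, Real.exp (ψ (cat [j] x)) * f (cat [j] x)

/-- `L_ψ 1 = 1`. -/
def Normalized (ψ : SeqSp N → ℝ) : Prop :=
  ∀ x, ∑ j : Fin N, Real.exp (ψ (cat [j] x)) = 1

/-- `ν` is a fixed point of the dual transfer operator: `∫ L_ψ f dν = ∫ f dν`
for all continuous `f`. -/
def IsTransferFixed (ψ : SeqSp N → ℝ) (ν : MeasureTheory.Measure (SeqSp N)) : Prop :=
  ∀ f : SeqSp N → ℝ, Continuous f → ∫ x, transfer ψ f x ∂ν = ∫ x, f x ∂ν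

/-- `ψ` is Hölder continuous on `I^ℕ`: `var_k(ψ) ≤ C αᵏ` for some `α ∈ (0,1)`. -/
def HolderPotential (ψ : SeqSp N → ℝ) : Prop :=
  ∃ α ∈ Set.Ioo (0:ℝ) 1, ∃ C : ℝ, ∀ k : ℕ, varn ψ k ≤ C * α ^ k

end Symb

namespace Symb

/-- A `C¹` iterated function system on `[0,1]`. -/
structure C1IFS (N : ℕ) where
  T : Fin N → ℝ → ℝ
  T' : Fin N → ℝ → ℝ
  maps_into : ∀ i, Set.MapsTo (T i) (Set.Icc 0 1) (Set.Icc 0 1)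
  hderiv : ∀ i, ∀ x ∈ Set.Icc (0:ℝ) 1, HasDerivWithinAt (T i) (T' i x) (Set.Icc 0 1) x
  cont_deriv : ∀ i, ContinuousOn (T' i) (Set.Icc 0 1)
  contracting : ∀ i, ∃ r < (1:ℝ), ∀ x ∈ Set.Icc (0:ℝ) 1, |T' i x| ≤ r
  deriv_bdd_below : ∀ i, ∃ c > (0:ℝ), ∀ x ∈ Set.Icc (0:ℝ) 1, c ≤ |T' i x|

variable {N : ℕ}

/-- The IFS is non-trivial: at least two maps and no common fixed point. -/
def C1IFS.NontrivialIFS (Φ : C1IFS N) : Prop :=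
  2 ≤ N ∧ ¬ ∃ x ∈ Set.Icc (0:ℝ) 1, ∀ i, Φ.T i x = x

/-- The IFS is `C^{1+γ}`: every `T_i'` is `γ`-Hölder for some `γ ∈ (0,1)`. -/
def C1IFS.IsC1gamma (Φ : C1IFS N) : Prop :=
  ∃ γ ∈ Set.Ioo (0:ℝ) 1, ∃ C : ℝ, ∀ i, ∀ x ∈ Set.Icc (0:ℝ) 1, ∀ y ∈ Set.Icc (0:ℝ) 1,
    |Φ.T' i x - Φ.T' i y| ≤ C * |x - y| ^ γ

/-- `T_w = T_{w₁} ∘ ⋯ ∘ T_{w_k}`. -/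
def wordMap (Φ : C1IFS N) : Word N → ℝ → ℝ
  | [] => id
  | i :: w => Φ.T i ∘ wordMap Φ w

/-- `T_w'`, the derivative of `T_w` (by the chain rule). -/
def wordDeriv (Φ : C1IFS N) : Word N → ℝ → ℝ
  | [] => fun _ => 1
  | i :: w => fun x => Φ.T' i (wordMap Φ w x) * wordDeriv Φ w x

/-- `π` is the natural coding map of the IFS:  `π(x) ∈ T_{x|m}([0,1])` for all `m`. -/
def IsCoding (Φ : C1IFS N) (π : SeqSp N → ℝ) : Prop :=
  ∀ x : SeqSp N, ∀ m : ℕ, π x ∈ wordMap Φ (List.ofFn fun i : Fin m => x i) '' Set.Icc 0 1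

/-- The geometric potential `φ(ω) = log |T'_{ω₁}(π(σω))|`. -/
def geomPot (Φ : C1IFS N) (π : SeqSp N → ℝ) (x : SeqSp N) : ℝ :=
  Real.log |Φ.T' (x 0) (π (shift x))|

/-- The open set condition with feasible open set `(0,1)`. -/
def OSC (Φ : C1IFS N) : Prop :=
  ∀ i j, i ≠ j → Disjoint (Φ.T i '' Set.Ioo 0 1) (Φ.T j '' Set.Ioo 0 1)

/-- Left endpoint of the interval `I_w = T_w([0,1])`. -/
def aW (Φ : C1IFS N) (w : Word N) : ℝ := sInf (wordMap Φ w '' Set.Icc 0 1)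

/-- Right endpoint of the interval `I_w = T_w([0,1])`. -/
def bW (Φ : C1IFS N) (w : Word N) : ℝ := sSup (wordMap Φ w '' Set.Icc 0 1)

/-- `(b_m)` is a weak bounded distortion sequence for `Φ`: non-negative, `o(m)`, and
`e^{-b_{|w|}} ≤ T_w'(x)/T_w'(y) ≤ e^{b_{|w|}}` for all words `w` and `x,y ∈ [0,1]`. -/
def IsWBDPseq (Φ : C1IFS N) (b : ℕ → ℝ) : Prop :=
  (∀ m, 0 ≤ b m) ∧ Filter.Tendsto (fun m => b m / m) Filter.atTop (nhds 0) ∧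
  ∀ w : Word N, ∀ x ∈ Set.Icc (0:ℝ) 1, ∀ y ∈ Set.Icc (0:ℝ) 1,
    Real.exp (-(b w.length)) ≤ wordDeriv Φ w x / wordDeriv Φ w y ∧
    wordDeriv Φ w x / wordDeriv Φ w y ≤ Real.exp (b w.length)

end Symb
namespace Lq

open MeasureTheory

/-- The dyadic interval `((k-1)2^{-n}, k 2^{-n}]`. -/
def dyadic (n : ℕ) (k : ℤ) : Set ℝ := Set.Ioc (((k : ℝ) - 1) / 2 ^ n) ((k : ℝ) / 2 ^ n)

/-- `Σ_{C ∈ D_n} ρ(C)^q`, the sum over dyadic intervals of positive measure. -/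
def lqSum (ρ : Measure ℝ) (n : ℕ) (q : ℝ) : ℝ :=
  ∑' k : ℤ, if ρ (dyadic n k) = 0 then 0 else (ρ (dyadic n k)).toReal ^ q

/-- `β_n^ρ(q) = (1/(n log 2)) log Σ_{C ∈ D_n} ρ(C)^q`. -/
def betaN (ρ : Measure ℝ) (n : ℕ) (q : ℝ) : ℝ :=
  Real.log (lqSum ρ n q) / (n * Real.log 2)

/-- The `L^q`-spectrum `β_ρ(q) = limsup_n β_n^ρ(q)`. -/
def beta (ρ : Measure ℝ) (q : ℝ) : ℝ :=
  Filter.limsup (fun n => betaN ρ n q) Filter.atTop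

end Lq
open Symb

/-!
Write `S n` for the `n`-th dyadic `q`-sum of `ρ`. By Fekete's lemma with a sublinear error term it
suffices that `S n * S m ≤ exp (o(n)) * S (n + m)`.

Cut every sequence at the shortest prefix `w` with `|T_w'(0)| ≤ 2⁻ⁿ`. These words have length
`O(n)`, so by weak bounded distortion `T_w` contracts by `2⁻ⁿ` up to a factor `exp (o(n))`, and
since `ν` is fixed by the dual transfer operator, `ρ` is comparable, again up to `exp (o(n))`, with
the finite mixture `∑ p_w • ρ ∘ T_w⁻¹`. Group the words according to the dyadic interval of level
`n` near which `T_w([0,1])` lies, and let `μ_k` be the part of the mixture coming from the `k`-th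
group, of total mass `P_k`. Every component has `q`-sum at least `exp (-o(n)) * S m` at level
`n + m`, hence by concavity of `t ↦ t ^ q` the `q`-sum of `μ_k` is at least
`exp (-o(n)) * P_k ^ q * S m`. Each `μ_k` meets only `exp (o(n))` intervals of level `n`, so
`∑ P_k ^ q` is comparable with `S n`, and the `q`-sums of the `μ_k` at level `n + m` add up to
`S (n + m)`, both up to `exp (o(n))`; overlaps between the images `T_w([0,1])` play no role.
-/

namespace Lq

section Real

open Asymptotics

theorem natCast_mul_sub_le_of_almost_superadditive {a e : ℕ → ℝ} (ha : ∀ n, 0 ≤ a n)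
    (hae : ∀ n m, a n + a m ≤ a (n + m) + e n) (n k r : ℕ) : k * (a n - e n) ≤ a (k * n + r) := by
  induction k with
  | zero => simpa using ha r
  | succ k ih =>
    have hstep := hae n (k * n + r)
    rw [show (k + 1) * n + r = n + (k * n + r) by ring]
    push_cast
    linarith

theorem tendsto_natCast_div_nat_div_atTop (n : ℕ) :
    Tendsto (fun N : ℕ => ((N / n : ℕ) : ℝ) / N) atTop (𝓝 (n : ℝ)⁻¹) := by
  refine ((tendsto_nat_floor_mul_div_atTop (R := ℝ) (inv_nonneg.2 n.cast_nonneg)).comp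
    tendsto_natCast_atTop_atTop).congr fun N => ?_
  rw [Function.comp_apply, ← Nat.floor_div_eq_div (K := ℝ), inv_mul_eq_div]

theorem exists_tendsto_div_of_almost_superadditive {a e : ℕ → ℝ} (ha : ∀ n, 0 ≤ a n)
    (hbdd : IsBoundedUnder (· ≤ ·) atTop fun n : ℕ => a n / n)
    (hae : ∀ n m, a n + a m ≤ a (n + m) + e n) (he : e =o[atTop] fun n : ℕ => (n : ℝ)) :
    ∃ L, Tendsto (fun n : ℕ => a n / n) atTop (𝓝 L) := by
  refine tendsto_of_no_upcrossings dense_univ (fun x _ y _ hxy ⟨hx, hy⟩ => ?_) hbdd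
    (isBoundedUnder_of ⟨0, fun n => div_nonneg (ha n) n.cast_nonneg⟩)
  obtain ⟨z, hxz, hzy⟩ := exists_between hxy
  obtain ⟨n, hyn, hen⟩ := (hy.and_eventually
    (he.tendsto_div_nhds_zero.eventually_lt_const (sub_pos.2 hzy))).exists
  have hzn : z < (n : ℝ)⁻¹ * (a n - e n) := by rw [inv_mul_eq_div, sub_div]; linarith
  have hzN : ∀ᶠ N : ℕ in atTop, z < ((N / n : ℕ) : ℝ) / N * (a n - e n) :=
    ((tendsto_natCast_div_nat_div_atTop n).mul_const _).eventually_const_lt hzn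
  obtain ⟨N, hxN, hzN⟩ := (hx.and_eventually hzN).exists
  refine (hxN.trans hxz).not_gt (hzN.trans_le ?_)
  have hN := natCast_mul_sub_le_of_almost_superadditive ha hae n (N / n) (N % n)
  rw [Nat.div_add_mod'] at hN
  rw [div_mul_eq_mul_div]
  gcongr

theorem exists_tendsto_zero_abs_sub_le {X : Type*} [PseudoMetricSpace X] {s : Set X}
    (hs : IsCompact s) {f : X → ℝ} (hf : ContinuousOn f s) {t : ℕ → ℝ}
    (ht : Tendsto t atTop (𝓝 0)) :
    ∃ δ : ℕ → ℝ, (∀ k, 0 ≤ δ k) ∧ Tendsto δ atTop (𝓝 0) ∧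
      ∀ k, ∀ x ∈ s, ∀ y ∈ s, dist x y ≤ t k → |f x - f y| ≤ δ k := by
  let V (k : ℕ) : Set ℝ := {d | ∃ x ∈ s, ∃ y ∈ s, dist x y ≤ t k ∧ |f x - f y| = d}
  have hV₀ (k) : ∀ d ∈ V k, 0 ≤ d := by
    rintro _ ⟨x, -, y, -, -, rfl⟩
    exact abs_nonneg _
  obtain ⟨C, hC⟩ := (hs.image_of_continuousOn hf).isBounded.exists_norm_le
  have hV₁ (k) : BddAbove (V k) := by
    refine ⟨C + C, ?_⟩
    rintro _ ⟨x, hx, y, hy, -, rfl⟩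
    exact (abs_sub _ _).trans (add_le_add (hC _ (mem_image_of_mem f hx))
      (hC _ (mem_image_of_mem f hy)))
  refine ⟨fun k => sSup (V k), fun k => Real.sSup_nonneg (hV₀ k), ?_,
    fun k x hx y hy hxy => le_csSup (hV₁ k) ⟨x, hx, y, hy, hxy, rfl⟩⟩
  have huc := Metric.uniformContinuousOn_iff.1 (hs.uniformContinuousOn_of_continuous hf)
  refine tendsto_order.2 ⟨fun l hl => .of_forall fun k => hl.trans_le (Real.sSup_nonneg (hV₀ k)),
    fun ε hε => ?_⟩
  obtain ⟨η, hη, hfη⟩ := huc (ε / 2) (half_pos hε)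
  filter_upwards [ht.eventually_lt_const hη] with k hk
  refine (Real.sSup_le ?_ (half_pos hε).le).trans_lt (half_lt_self hε)
  rintro _ ⟨x, hx, y, hy, hxy, rfl⟩
  exact (hfη x hx y hy (hxy.trans_lt hk)).le

theorem exists_sub_eq_mul_sub_of_hasDerivWithinAt {f f' : ℝ → ℝ} {a b x y : ℝ}
    (hf : ∀ z ∈ Icc a b, HasDerivWithinAt f (f' z) (Icc a b) z) (hx : x ∈ Icc a b)
    (hy : y ∈ Icc a b) : ∃ z ∈ Icc a b, f x - f y = f' z * (x - y) := by
  wlog hxy : y ≤ x generalizing x y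
  · obtain ⟨z, hz, h⟩ := this hy hx (le_of_not_ge hxy)
    exact ⟨z, hz, by linarith⟩
  obtain rfl | hlt := hxy.eq_or_lt
  · exact ⟨y, hy, by simp⟩
  have hsub : Icc y x ⊆ Icc a b := Icc_subset_Icc hy.1 hx.2
  obtain ⟨z, hz, h⟩ := exists_hasDerivAt_eq_slope f f' hlt
    (fun z hz => ((hf z (hsub hz)).continuousWithinAt).mono hsub) fun z hz =>
      (hf z (hsub (Ioo_subset_Icc_self hz))).hasDerivAt
        (Icc_mem_nhds (hy.1.trans_lt hz.1) (hz.2.trans_le hx.2))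
  exact ⟨z, hsub (Ioo_subset_Icc_self hz), by rw [h, div_mul_cancel₀ _ (sub_pos.2 hlt).ne']⟩

/-- A nonnegative, monotone sequence that is `o(n)`: the form in which distortion errors
accumulate. -/
structure IsSublinear (b : ℕ → ℝ) : Prop where
  nonneg : ∀ n, 0 ≤ b n
  mono : Monotone b
  isLittleO : b =o[atTop] fun n : ℕ => (n : ℝ)

theorem IsSublinear.sum_range {δ : ℕ → ℝ} (hδ₀ : ∀ k, 0 ≤ δ k) (hδ : Tendsto δ atTop (𝓝 0)) :
    IsSublinear fun n => ∑ k ∈ Finset.range n, δ k where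
  nonneg _ := Finset.sum_nonneg fun k _ => hδ₀ k
  mono := monotone_nat_of_le_succ fun n => by simp [Finset.sum_range_succ, hδ₀]
  isLittleO := isLittleO_sum_range_of_tendsto_zero hδ

theorem IsSublinear.isLittleO_comp_mul {b : ℕ → ℝ} (hb : IsSublinear b) {A : ℕ} (hA : 0 < A) :
    (fun n => b (A * n)) =o[atTop] fun n : ℕ => (n : ℝ) := by
  refine (hb.isLittleO.comp_tendsto (tendsto_id.const_mul_atTop' hA)).trans_isBigO ?_
  simpa [Function.comp_def] using (isBigO_refl (fun n : ℕ => (n : ℝ)) atTop).const_mul_left A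

end Real

section ENNReal

theorem tsum_rpow_le {ι : Type*} (f : ι → ℝ≥0∞) {q : ℝ} (hq0 : 0 < q) (hq1 : q ≤ 1) :
    (∑' i, f i) ^ q ≤ ∑' i, f i ^ q := by
  have hfinset (s : Finset ι) : (∑ i ∈ s, f i) ^ q ≤ ∑ i ∈ s, f i ^ q :=
    Finset.le_sum_of_subadditive (· ^ q) (ENNReal.zero_rpow_of_pos hq0).le
      (fun _ _ => ENNReal.rpow_add_le_add_rpow _ _ hq0.le hq1) s f
  exact le_of_tendsto ((ENNReal.continuous_rpow_const.tendsto _).comp ENNReal.summable.hasSum)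
    (.of_forall fun s => (hfinset s).trans (ENNReal.sum_le_tsum s))

theorem sum_mul_rpow_le {ι : Type*} (s : Finset ι) (p a : ι → ℝ≥0∞) {q : ℝ} (hq0 : 0 < q)
    (hq1 : q ≤ 1) :
    ∑ i ∈ s, p i * a i ^ q ≤ (∑ i ∈ s, p i) ^ (1 - q) * (∑ i ∈ s, p i * a i) ^ q := by
  simpa [← ENNReal.rpow_mul, hq0.ne'] using
    ENNReal.inner_le_weight_mul_Lp_of_nonneg s ((one_le_inv₀ hq0).2 hq1) p fun i => a i ^ q

theorem tsum_int_le_of_abs_sub_le {f : ℤ → ℝ≥0∞} {B : ℝ≥0∞} {K : ℕ} {k₀ : ℤ} (hB : ∀ k, f k ≤ B)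
    (hK : ∀ k, f k ≠ 0 → |k - k₀| ≤ K) : ∑' k, f k ≤ (2 * K + 1) * B := by
  have hsum : ∑' k, f k = ∑ k ∈ Finset.Icc (k₀ - K) (k₀ + K), f k := by
    refine tsum_eq_sum fun k hk => of_not_not fun hne => hk ?_
    have := abs_le.1 (hK k hne)
    exact Finset.mem_Icc.2 ⟨by linarith, by linarith⟩
  have hcard : (k₀ + K + 1 - (k₀ - K)).toNat = 2 * K + 1 := by omega
  calc ∑' k, f k ≤ (Finset.Icc (k₀ - K) (k₀ + K)).card • B :=
        hsum.trans_le (Finset.sum_le_card_nsmul _ _ B fun k _ => hB k)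
    _ = (2 * K + 1) * B := by rw [nsmul_eq_mul, Int.card_Icc, hcard]; push_cast; rfl

end ENNReal

section Dyadic

theorem mem_dyadic_iff {n : ℕ} {k : ℤ} {y : ℝ} : y ∈ dyadic n k ↔ ⌈2 ^ n * y⌉ = k := by
  have h2 : (0 : ℝ) < 2 ^ n := by positivity
  rw [Int.ceil_eq_iff, dyadic, mem_Ioc, div_lt_iff₀ h2, le_div_iff₀ h2, mul_comm y]

theorem measurableSet_dyadic (n : ℕ) (k : ℤ) : MeasurableSet (dyadic n k) :=
  measurableSet_Ioc

theorem pairwise_disjoint_dyadic (n : ℕ) : Pairwise (Function.onFun Disjoint (dyadic n)) :=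
  fun _ _ hkl => disjoint_left.2 fun _ hk hl =>
    hkl ((mem_dyadic_iff.1 hk).symm.trans (mem_dyadic_iff.1 hl))

theorem iUnion_dyadic (n : ℕ) : ⋃ k, dyadic n k = univ :=
  eq_univ_of_forall fun _ => mem_iUnion.2 ⟨_, mem_dyadic_iff.2 rfl⟩

theorem exists_dyadic_add_subset (n m : ℕ) (k : ℤ) : ∃ l, dyadic (n + m) k ⊆ dyadic n l := by
  refine ⟨⌈(k : ℝ) / 2 ^ m⌉, fun y hy => mem_dyadic_iff.2 (eq_of_forall_ge_iff fun j => ?_)⟩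
  have h2 : (0 : ℝ) < 2 ^ m := by positivity
  have hj : (j : ℝ) * 2 ^ m = ((j * 2 ^ m : ℤ) : ℝ) := by push_cast; rfl
  rw [Int.ceil_le, Int.ceil_le, div_le_iff₀ h2, hj, Int.cast_le, ← mem_dyadic_iff.1 hy, Int.ceil_le,
    ← hj, pow_add, mul_right_comm, mul_le_mul_iff_left₀ h2]

theorem abs_sub_le_of_mem_dyadic {n : ℕ} {k : ℤ} {x y : ℝ} (hx : x ∈ dyadic n k)
    (hy : y ∈ dyadic n k) : |x - y| ≤ 1 / 2 ^ n := by
  simp only [dyadic, mem_Ioc, sub_div] at hx hy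
  rw [abs_le]
  constructor <;> linarith

theorem abs_ceil_sub_ceil_le {a b : ℝ} {K : ℕ} (h : |a - b| ≤ K) : |⌈a⌉ - ⌈b⌉| ≤ (K : ℤ) := by
  have hceil {a b : ℝ} (h : a ≤ b + K) : ⌈a⌉ ≤ ⌈b⌉ + K :=
    (Int.ceil_mono h).trans_eq (Int.ceil_add_natCast b K)
  rw [abs_le] at h ⊢
  have hab := hceil (show a ≤ b + K by linarith)
  have hba := hceil (show b ≤ a + K by linarith)
  constructor <;> linarith

end Dyadic

section DyadicSum

/-- `∑_{C ∈ D_n} ρ(C)^q` with values in `ℝ≥0∞`, so that no summability question arises. -/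
def dyadicSum (ρ : Measure ℝ) (q : ℝ) (n : ℕ) : ℝ≥0∞ :=
  ∑' k : ℤ, ρ (dyadic n k) ^ q

/-- `μ` charges only dyadic intervals of generation `n` whose index is within `K` of `k`. -/
def IsConcentrated (μ : Measure ℝ) (n K : ℕ) (k : ℤ) : Prop :=
  ∀ l, μ (dyadic n l) ≠ 0 → |l - k| ≤ K

variable {q : ℝ}

theorem lqSum_eq_toReal_dyadicSum (ρ : Measure ℝ) [IsFiniteMeasure ρ] (hq0 : 0 < q) (n : ℕ) :
    lqSum ρ n q = (dyadicSum ρ q n).toReal := by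
  rw [lqSum, dyadicSum, ENNReal.tsum_toReal_eq fun k =>
    ENNReal.rpow_ne_top_of_nonneg hq0.le (measure_ne_top _ _)]
  refine tsum_congr fun k => ?_
  rw [← ENNReal.toReal_rpow]
  split_ifs with h
  · simp [h, hq0.ne']
  · rfl

theorem measure_univ_rpow_le_dyadicSum (ρ : Measure ℝ) (hq0 : 0 < q) (hq1 : q ≤ 1) (n : ℕ) :
    ρ univ ^ q ≤ dyadicSum ρ q n := by
  rw [← iUnion_dyadic n, measure_iUnion (pairwise_disjoint_dyadic n) (measurableSet_dyadic n)]
  exact tsum_rpow_le _ hq0 hq1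

theorem dyadicSum_le_of_le_smul {ρ ρ' : Measure ℝ} {c : ℝ≥0∞} (h : ρ ≤ c • ρ') (hq0 : 0 ≤ q)
    (n : ℕ) : dyadicSum ρ q n ≤ c ^ q * dyadicSum ρ' q n := by
  rw [dyadicSum, dyadicSum, ← ENNReal.tsum_mul_left]
  refine ENNReal.tsum_le_tsum fun k => ?_
  rw [← ENNReal.mul_rpow_of_nonneg _ _ hq0]
  exact ENNReal.rpow_le_rpow (h _) hq0

theorem dyadicSum_sum_le {ι : Type*} (μ : ι → Measure ℝ) (hq0 : 0 < q) (hq1 : q ≤ 1) (n : ℕ) :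
    dyadicSum (Measure.sum μ) q n ≤ ∑' i, dyadicSum (μ i) q n := by
  simp only [dyadicSum]
  rw [ENNReal.tsum_comm]
  refine ENNReal.tsum_le_tsum fun k => ?_
  rw [Measure.sum_apply _ (measurableSet_dyadic n k)]
  exact tsum_rpow_le _ hq0 hq1

theorem isConcentrated_map {Ω : Type*} [MeasurableSpace Ω] {μ : Measure Ω} {X : Ω → ℝ}
    (hX : Measurable X) {n K : ℕ} {y : ℝ} (h : ∀ᵐ x ∂μ, 2 ^ n * |X x - y| ≤ K) :
    IsConcentrated (μ.map X) n K ⌈2 ^ n * y⌉ := by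
  intro l hl
  rw [Measure.map_apply hX (measurableSet_dyadic n l)] at hl
  obtain ⟨x, hxl, hx⟩ := Filter.Frequently.exists
    ((frequently_ae_mem_iff.2 hl).and_eventually h)
  rw [← mem_dyadic_iff.1 hxl]
  refine abs_ceil_sub_ceil_le ?_
  rwa [← mul_sub, abs_mul, abs_of_pos (by positivity)]

theorem IsConcentrated.dyadicSum_le {μ : Measure ℝ} {n K : ℕ} {k : ℤ}
    (h : IsConcentrated μ n K k) (hq0 : 0 < q) :
    dyadicSum μ q n ≤ (2 * K + 1) * μ univ ^ q :=
  tsum_int_le_of_abs_sub_le (fun _ => ENNReal.rpow_le_rpow (measure_mono (subset_univ _)) hq0.le)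
    fun l hl => h l fun h0 => hl (by rw [h0, ENNReal.zero_rpow_of_pos hq0])

theorem IsConcentrated.finsetSum_smul {ι : Type*} {s : Finset ι} {p : ι → ℝ≥0∞}
    {μ : ι → Measure ℝ} {n K : ℕ} {k : ℤ} (h : ∀ i ∈ s, IsConcentrated (μ i) n K k) :
    IsConcentrated (∑ i ∈ s, p i • μ i) n K k := by
  intro l hl
  rw [Measure.finsetSum_apply] at hl
  obtain ⟨i, hi, hil⟩ := Finset.exists_ne_zero_of_sum_ne_zero hl
  exact h i hi l (right_ne_zero_of_mul hil)

theorem tsum_dyadicSum_le_of_isConcentrated {μ : ℤ → Measure ℝ} {n K : ℕ}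
    (h : ∀ k, IsConcentrated (μ k) n K k) (hq0 : 0 < q) (m : ℕ) :
    ∑' k, dyadicSum (μ k) q (n + m) ≤ (2 * K + 1) * dyadicSum (Measure.sum μ) q (n + m) := by
  simp only [dyadicSum]
  rw [ENNReal.tsum_comm, ← ENNReal.tsum_mul_left]
  refine ENNReal.tsum_le_tsum fun l => ?_
  obtain ⟨j, hj⟩ := exists_dyadic_add_subset n m l
  refine tsum_int_le_of_abs_sub_le (k₀ := j)
    (fun k => ENNReal.rpow_le_rpow (Measure.le_sum μ k _) hq0.le) fun k hk => ?_
  rw [abs_sub_comm]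
  refine h k j fun h0 => hk ?_
  rw [measure_mono_null hj h0, ENNReal.zero_rpow_of_pos hq0]

theorem dyadicSum_sum_mul_le_of_isConcentrated {μ : ℤ → Measure ℝ} {n m K : ℕ} {S M : ℝ≥0∞}
    (h : ∀ k, IsConcentrated (μ k) n K k)
    (hS : ∀ k, μ k univ ^ q * S ≤ M * dyadicSum (μ k) q (n + m)) (hq0 : 0 < q) (hq1 : q ≤ 1) :
    dyadicSum (Measure.sum μ) q n * S ≤
      (2 * K + 1) ^ 2 * M * dyadicSum (Measure.sum μ) q (n + m) := by
  calc dyadicSum (Measure.sum μ) q n * S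
      ≤ (∑' k, (2 * K + 1) * μ k univ ^ q) * S := by
        gcongr
        exact (dyadicSum_sum_le μ hq0 hq1 n).trans
          (ENNReal.tsum_le_tsum fun k => (h k).dyadicSum_le hq0)
    _ = (2 * K + 1) * ∑' k, μ k univ ^ q * S := by
        rw [ENNReal.tsum_mul_left, ENNReal.tsum_mul_right, mul_assoc]
    _ ≤ (2 * K + 1) * ∑' k, M * dyadicSum (μ k) q (n + m) :=
        mul_le_mul' le_rfl (ENNReal.tsum_le_tsum hS)
    _ ≤ (2 * K + 1) * (M * ((2 * K + 1) * dyadicSum (Measure.sum μ) q (n + m))) := by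
        rw [ENNReal.tsum_mul_left]
        gcongr
        exact tsum_dyadicSum_le_of_isConcentrated h hq0 m
    _ = _ := by ring

theorem sum_mul_dyadicSum_le {ι : Type*} (s : Finset ι) (p : ι → ℝ≥0∞) (μ : ι → Measure ℝ)
    (hq0 : 0 < q) (hq1 : q ≤ 1) (n : ℕ) :
    ∑ i ∈ s, p i * dyadicSum (μ i) q n ≤
      (∑ i ∈ s, p i) ^ (1 - q) * dyadicSum (∑ i ∈ s, p i • μ i) q n := by
  simp only [dyadicSum, ← ENNReal.tsum_mul_left]
  rw [← Summable.tsum_finsetSum fun i _ => ENNReal.summable]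
  refine ENNReal.tsum_le_tsum fun k => ?_
  simpa [Measure.finsetSum_apply] using sum_mul_rpow_le s p (fun i => μ i (dyadic n k)) hq0 hq1

theorem sum_rpow_mul_le_dyadicSum {ι : Type*} {s : Finset ι} {p : ι → ℝ≥0∞} {μ : ι → Measure ℝ}
    {n : ℕ} {S M : ℝ≥0∞} (hp : ∀ i ∈ s, p i ≠ ∞) (hS : ∀ i ∈ s, S ≤ M * dyadicSum (μ i) q n)
    (hq0 : 0 < q) (hq1 : q ≤ 1) :
    (∑ i ∈ s, p i) ^ q * S ≤ M * dyadicSum (∑ i ∈ s, p i • μ i) q n := by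
  set P := ∑ i ∈ s, p i with hP
  obtain hP0 | hP0 := eq_or_ne P 0
  · simp [hP0, hq0]
  have hPtop : P ≠ ∞ := ENNReal.sum_ne_top.2 hp
  have hrpow (a b : ℝ) : P ^ a * P ^ b = P ^ (a + b) := (ENNReal.rpow_add a b hP0 hPtop).symm
  have hPS : P * S ≤ P ^ (1 - q) * (M * dyadicSum (∑ i ∈ s, p i • μ i) q n) :=
    calc P * S ≤ ∑ i ∈ s, p i * (M * dyadicSum (μ i) q n) := by
          rw [hP, Finset.sum_mul]
          gcongr with i hi
          exact hS i hi
      _ = M * ∑ i ∈ s, p i * dyadicSum (μ i) q n := by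
          simp only [Finset.mul_sum, mul_left_comm]
      _ ≤ _ := by
          rw [mul_left_comm]
          gcongr
          exact sum_mul_dyadicSum_le s p μ hq0 hq1 n
  calc P ^ q * S = P ^ (q - 1) * (P * S) := by
        nth_rw 3 [← ENNReal.rpow_one P]
        rw [← mul_assoc, hrpow, sub_add_cancel]
    _ ≤ P ^ (q - 1) * (P ^ (1 - q) * (M * dyadicSum (∑ i ∈ s, p i • μ i) q n)) := by gcongr
    _ = _ := by rw [← mul_assoc, hrpow, sub_add_sub_cancel, sub_self, ENNReal.rpow_zero, one_mul]

theorem sum_fiberwise_eq_finsetSum {ι : Type*} (s : Finset ι) (κ : ι → ℤ) (μ : ι → Measure ℝ) :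
    Measure.sum (fun k => ∑ i ∈ s with κ i = k, μ i) = ∑ i ∈ s, μ i := by
  ext A hA
  simp only [Measure.sum_apply _ hA, Measure.finsetSum_apply]
  simp only [Finset.sum_filter]
  rw [Summable.tsum_finsetSum fun i _ => ENNReal.summable]
  simp only [eq_comm (a := κ _), tsum_ite_eq]

theorem dyadicSum_finsetSum_smul_mul_le {ι : Type*} {s : Finset ι} {p : ι → ℝ≥0∞}
    {μ : ι → Measure ℝ} [∀ i, IsProbabilityMeasure (μ i)] {n m K : ℕ} {κ : ι → ℤ} {S M : ℝ≥0∞}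
    (hp : ∀ i ∈ s, p i ≠ ∞) (hμ : ∀ i ∈ s, IsConcentrated (μ i) n K (κ i))
    (hS : ∀ i ∈ s, S ≤ M * dyadicSum (μ i) q (n + m)) (hq0 : 0 < q) (hq1 : q ≤ 1) :
    dyadicSum (∑ i ∈ s, p i • μ i) q n * S ≤
      (2 * K + 1) ^ 2 * M * dyadicSum (∑ i ∈ s, p i • μ i) q (n + m) := by
  rw [← sum_fiberwise_eq_finsetSum s κ]
  refine dyadicSum_sum_mul_le_of_isConcentrated (fun k => ?_) (fun k => ?_) hq0 hq1
  · exact .finsetSum_smul fun i hi => (Finset.mem_filter.1 hi).2 ▸ hμ i (Finset.mem_filter.1 hi).1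
  · have huniv : (∑ i ∈ s with κ i = k, p i • μ i) univ = ∑ i ∈ s with κ i = k, p i := by
      simp [Measure.finsetSum_apply]
    rw [huniv]
    exact sum_rpow_mul_le_dyadicSum (fun i hi => hp i (Finset.mem_filter.1 hi).1)
      (fun i hi => hS i (Finset.mem_filter.1 hi).1) hq0 hq1

theorem dyadicSum_map_le_of_abs_sub_le {Ω : Type*} [MeasurableSpace Ω] (ν : Measure Ω) {X Y : Ω → ℝ}
    (hX : Measurable X) (hY : Measurable Y) {n K : ℕ}
    (hXY : ∀ x y, |X x - X y| ≤ K * 2 ^ n * |Y x - Y y|) (m : ℕ) (hq0 : 0 < q) (hq1 : q ≤ 1) :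
    dyadicSum (ν.map X) q m ≤ (2 * K + 1) * dyadicSum (ν.map Y) q (n + m) := by
  set A : ℤ → Set Ω := fun l => Y ⁻¹' dyadic (n + m) l
  have hA (l) : MeasurableSet (A l) := hY (measurableSet_dyadic _ l)
  have hsum : ν.map X = Measure.sum fun l => (ν.restrict (A l)).map X := by
    rw [← Measure.map_sum hX.aemeasurable, ← Measure.restrict_iUnion
      (fun k l hkl => (pairwise_disjoint_dyadic _ hkl).preimage Y) hA, ← preimage_iUnion,
      iUnion_dyadic, preimage_univ, Measure.restrict_univ]
  have hpiece (l) : dyadicSum ((ν.restrict (A l)).map X) q m ≤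
      (2 * K + 1) * ν.map Y (dyadic (n + m) l) ^ q := by
    obtain hempty | ⟨x₀, hx₀⟩ := (A l).eq_empty_or_nonempty
    · simp [hempty, dyadicSum, hq0]
    have hconc : IsConcentrated ((ν.restrict (A l)).map X) m K ⌈2 ^ m * X x₀⌉ := by
      refine isConcentrated_map hX (ae_restrict_of_forall_mem (hA l) fun x hx => ?_)
      calc 2 ^ m * |X x - X x₀| ≤ 2 ^ m * (K * 2 ^ n * (1 / 2 ^ (n + m))) := by
            gcongr
            exact (hXY x x₀).trans (by gcongr; exact abs_sub_le_of_mem_dyadic hx hx₀)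
        _ = K := by rw [pow_add]; field_simp
    refine (hconc.dyadicSum_le hq0).trans_eq ?_
    rw [Measure.map_apply hX .univ, Measure.map_apply hY (measurableSet_dyadic _ l),
      preimage_univ, Measure.restrict_apply_univ]
  rw [hsum]
  refine (dyadicSum_sum_le _ hq0 hq1 m).trans ((ENNReal.tsum_le_tsum hpiece).trans_eq ?_)
  rw [ENNReal.tsum_mul_left, dyadicSum]

end DyadicSum

section Limit

variable {q : ℝ}

theorem dyadicSum_map_mul_le {Ω ι : Type*} [MeasurableSpace Ω] {ν : Measure Ω}
    [IsProbabilityMeasure ν] {s : Finset ι} {X : Ω → ℝ} {Y : ι → Ω → ℝ} {p : ι → ℝ≥0∞} {c : ℝ≥0∞}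
    {n K : ℕ} (hX : Measurable X) (hY : ∀ i, Measurable (Y i)) (hp : ∀ i ∈ s, p i ≠ ∞)
    (hle : ν.map X ≤ c • ∑ i ∈ s, p i • ν.map (Y i))
    (hge : ∑ i ∈ s, p i • ν.map (Y i) ≤ c • ν.map X)
    (hXY : ∀ i ∈ s, ∀ x y, |X x - X y| ≤ K * 2 ^ n * |Y i x - Y i y|)
    (hYY : ∀ i ∈ s, ∀ x y, 2 ^ n * |Y i x - Y i y| ≤ K) (m : ℕ) (hq0 : 0 < q) (hq1 : q ≤ 1) :
    dyadicSum (ν.map X) q n * dyadicSum (ν.map X) q m ≤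
      (2 * K + 1) ^ 3 * (c ^ q) ^ 2 * dyadicSum (ν.map X) q (n + m) := by
  obtain ⟨x₀⟩ : Nonempty Ω := ν.nonempty_of_neZero
  have (i : ι) : IsProbabilityMeasure (ν.map (Y i)) :=
    Measure.isProbabilityMeasure_map (hY i).aemeasurable
  have hmix := dyadicSum_finsetSum_smul_mul_le (m := m) hp
    (fun i hi => isConcentrated_map (hY i) (.of_forall fun x => hYY i hi x x₀))
    (fun i hi => dyadicSum_map_le_of_abs_sub_le ν hX (hY i) (hXY i hi) m hq0 hq1) hq0 hq1
  set η := ∑ i ∈ s, p i • ν.map (Y i)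
  calc dyadicSum (ν.map X) q n * dyadicSum (ν.map X) q m
      ≤ c ^ q * (dyadicSum η q n * dyadicSum (ν.map X) q m) := by
        rw [← mul_assoc]
        gcongr
        exact dyadicSum_le_of_le_smul hle hq0.le n
    _ ≤ c ^ q * ((2 * K + 1) ^ 2 * (2 * K + 1) * (c ^ q * dyadicSum (ν.map X) q (n + m))) := by
        grw [hmix, dyadicSum_le_of_le_smul hge hq0.le]
    _ = _ := by ring

variable {ρ : Measure ℝ} [IsProbabilityMeasure ρ]

theorem dyadicSum_le_of_ae_mem_Icc (hρ : ∀ᵐ x ∂ρ, x ∈ Icc (0 : ℝ) 1) (hq0 : 0 < q) (n : ℕ) :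
    dyadicSum ρ q n ≤ 2 ^ (n + 2) := by
  have hconc := isConcentrated_map (μ := ρ) measurable_id (n := n) (K := 2 ^ n) (y := 0) <| by
    filter_upwards [hρ] with x hx
    simpa [abs_of_nonneg hx.1] using hx.2
  rw [Measure.map_id] at hconc
  calc dyadicSum ρ q n ≤ ((2 * 2 ^ n + 1 : ℕ) : ℝ≥0∞) := by simpa using hconc.dyadicSum_le hq0
    _ ≤ ((2 ^ (n + 2) : ℕ) : ℝ≥0∞) := by
        gcongr
        rw [pow_add]
        linarith [Nat.one_le_two_pow (n := n)]
    _ = 2 ^ (n + 2) := by push_cast; rfl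

theorem exists_tendsto_betaN (hρ : ∀ᵐ x ∂ρ, x ∈ Icc (0 : ℝ) 1) (hq0 : 0 < q) (hq1 : q ≤ 1)
    {e : ℕ → ℝ} (he : e =o[atTop] fun n : ℕ => (n : ℝ))
    (hsuper : ∀ n m, dyadicSum ρ q n * dyadicSum ρ q m ≤
      ENNReal.ofReal (Real.exp (e n)) * dyadicSum ρ q (n + m)) :
    ∃ L, Tendsto (fun n => betaN ρ n q) atTop (𝓝 L) := by
  set S : ℕ → ℝ := fun n => (dyadicSum ρ q n).toReal
  have hle (n) := dyadicSum_le_of_ae_mem_Icc hρ hq0 n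
  have htop (n) : dyadicSum ρ q n ≠ ∞ := ne_top_of_le_ne_top (by simp) (hle n)
  have hS_one (n) : 1 ≤ S n := by
    simpa using ENNReal.toReal_mono (htop n) (measure_univ_rpow_le_dyadicSum ρ hq0 hq1 n)
  have hS_pos (n) : 0 < S n := one_pos.trans_le (hS_one n)
  have hS_le (n) : Real.log (S n) ≤ (n + 2) * Real.log 2 := by
    have := Real.log_le_log (hS_pos n) (ENNReal.toReal_mono (by simp) (hle n))
    simpa using this
  have hbdd : IsBoundedUnder (· ≤ ·) atTop fun n : ℕ => Real.log (S n) / n := by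
    refine isBoundedUnder_of_eventually_le (a := 3 * Real.log 2) ?_
    filter_upwards [eventually_ge_atTop 1] with n hn
    have hn' : (1 : ℝ) ≤ n := by exact_mod_cast hn
    rw [div_le_iff₀ (by positivity)]
    nlinarith [hS_le n, Real.log_pos one_lt_two]
  have hlog (n m) : Real.log (S n) + Real.log (S m) ≤ Real.log (S (n + m)) + e n := by
    rw [← Real.log_mul (hS_pos n).ne' (hS_pos m).ne', add_comm, ← Real.log_exp (e n),
      ← Real.log_mul (Real.exp_pos _).ne' (hS_pos _).ne']
    refine Real.log_le_log (mul_pos (hS_pos n) (hS_pos m)) ?_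
    simpa [S, Real.exp_nonneg] using
      ENNReal.toReal_mono (ENNReal.mul_ne_top ENNReal.ofReal_ne_top (htop _)) (hsuper n m)
  obtain ⟨L, hL⟩ := exists_tendsto_div_of_almost_superadditive
    (fun n => Real.log_nonneg (hS_one n)) hbdd hlog he
  refine ⟨L / Real.log 2, (hL.div_const _).congr fun n => ?_⟩
  rw [betaN, lqSum_eq_toReal_dyadicSum ρ hq0, div_div]

end Limit

end Lq

namespace Symb

open Lq Asymptotics

variable {N : ℕ}

section IFS

variable (Φ : C1IFS N)

theorem C1IFS.exists_abs_deriv_le : ∃ r ∈ Ioo (0 : ℝ) 1, ∀ i, ∀ x ∈ Icc (0 : ℝ) 1,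
    |Φ.T' i x| ≤ r := by
  have hle : ∀ᶠ r : ℝ in 𝓝[<] 1, ∀ i, ∀ x ∈ Icc (0 : ℝ) 1, |Φ.T' i x| ≤ r := by
    refine eventually_all.2 fun i => ?_
    obtain ⟨r, hr, h⟩ := Φ.contracting i
    filter_upwards [Ioo_mem_nhdsLT hr] with s hs x hx
    exact (h x hx).trans hs.1.le
  exact (Filter.Eventually.and (Ioo_mem_nhdsLT one_pos) hle).exists

theorem C1IFS.exists_le_abs_deriv : ∃ c ∈ Ioo (0 : ℝ) 1, ∀ i, ∀ x ∈ Icc (0 : ℝ) 1,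
    c ≤ |Φ.T' i x| := by
  have hle : ∀ᶠ c : ℝ in 𝓝[>] 0, ∀ i, ∀ x ∈ Icc (0 : ℝ) 1, c ≤ |Φ.T' i x| := by
    refine eventually_all.2 fun i => ?_
    obtain ⟨c, hc, h⟩ := Φ.deriv_bdd_below i
    filter_upwards [Ioo_mem_nhdsGT hc] with s hs x hx
    exact hs.2.le.trans (h x hx)
  exact (Filter.Eventually.and (Ioo_mem_nhdsGT one_pos) hle).exists

theorem wordMap_mem_Icc (w : Word N) {x : ℝ} (hx : x ∈ Icc (0 : ℝ) 1) :
    wordMap Φ w x ∈ Icc (0 : ℝ) 1 := by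
  induction w with
  | nil => exact hx
  | cons i w ih => exact Φ.maps_into i ih

theorem wordMap_append (w v : Word N) (x : ℝ) :
    wordMap Φ (w ++ v) x = wordMap Φ w (wordMap Φ v x) := by
  induction w with
  | nil => rfl
  | cons i w ih => simp only [List.cons_append, wordMap, Function.comp_apply, ih]

theorem wordDeriv_append (w v : Word N) (x : ℝ) :
    wordDeriv Φ (w ++ v) x = wordDeriv Φ w (wordMap Φ v x) * wordDeriv Φ v x := by
  induction w with
  | nil => simp [wordDeriv]
  | cons i w ih => simp only [List.cons_append, wordDeriv, wordMap_append, ih, mul_assoc]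

theorem hasDerivWithinAt_wordMap (w : Word N) {x : ℝ} (hx : x ∈ Icc (0 : ℝ) 1) :
    HasDerivWithinAt (wordMap Φ w) (wordDeriv Φ w x) (Icc 0 1) x := by
  induction w with
  | nil => exact hasDerivWithinAt_id x _
  | cons i w ih =>
    exact (Φ.hderiv i _ (wordMap_mem_Icc Φ w hx)).comp x ih fun y => wordMap_mem_Icc Φ w

theorem exists_wordMap_sub_eq (w : Word N) {x y : ℝ} (hx : x ∈ Icc (0 : ℝ) 1)
    (hy : y ∈ Icc (0 : ℝ) 1) :
    ∃ z ∈ Icc (0 : ℝ) 1, wordMap Φ w x - wordMap Φ w y = wordDeriv Φ w z * (x - y) :=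
  exists_sub_eq_mul_sub_of_hasDerivWithinAt (fun _ => hasDerivWithinAt_wordMap Φ w) hx hy

variable {Φ}

theorem abs_wordDeriv_le_pow {r : ℝ} (hr : ∀ i, ∀ x ∈ Icc (0 : ℝ) 1, |Φ.T' i x| ≤ r)
    (w : Word N) {x : ℝ} (hx : x ∈ Icc (0 : ℝ) 1) : |wordDeriv Φ w x| ≤ r ^ w.length := by
  induction w with
  | nil => simp [wordDeriv]
  | cons i w ih =>
    have hi := hr i _ (wordMap_mem_Icc Φ w hx)
    rw [wordDeriv, abs_mul, List.length_cons, pow_succ']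
    exact mul_le_mul hi ih (abs_nonneg _) ((abs_nonneg _).trans hi)

theorem abs_wordMap_sub_le_pow {r : ℝ} (hr : ∀ i, ∀ x ∈ Icc (0 : ℝ) 1, |Φ.T' i x| ≤ r)
    (w : Word N) {x y : ℝ} (hx : x ∈ Icc (0 : ℝ) 1) (hy : y ∈ Icc (0 : ℝ) 1) :
    |wordMap Φ w x - wordMap Φ w y| ≤ r ^ w.length := by
  obtain ⟨z, hz, h⟩ := exists_wordMap_sub_eq Φ w hx hy
  have hxy : |x - y| ≤ 1 := by simpa using abs_sub_le_of_le_of_le hx.1 hx.2 hy.1 hy.2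
  rw [h, abs_mul]
  exact (mul_le_of_le_one_right (abs_nonneg _) hxy).trans (abs_wordDeriv_le_pow hr w hz)

variable (Φ)

theorem C1IFS.exists_deriv_modulus {r : ℝ} (hr : r ∈ Ioo (0 : ℝ) 1) :
    ∃ δ : ℕ → ℝ, (∀ k, 0 ≤ δ k) ∧ Tendsto δ atTop (𝓝 0) ∧
      ∀ k i, ∀ x ∈ Icc (0 : ℝ) 1, ∀ y ∈ Icc (0 : ℝ) 1, |x - y| ≤ r ^ k →
        |Φ.T' i x| ≤ Real.exp (δ k) * |Φ.T' i y| := by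
  have hpos (i) : ∀ x ∈ Icc (0 : ℝ) 1, 0 < |Φ.T' i x| := by
    obtain ⟨c, hc, h⟩ := Φ.deriv_bdd_below i
    exact fun x hx => hc.trans_le (h x hx)
  choose δ hδ₀ hδ hmod using fun i => exists_tendsto_zero_abs_sub_le isCompact_Icc
    ((Φ.cont_deriv i).abs.log fun x hx => (hpos i x hx).ne')
    (tendsto_pow_atTop_nhds_zero_of_lt_one hr.1.le hr.2)
  refine ⟨fun k => ∑ i, δ i k, fun k => Finset.sum_nonneg fun i _ => hδ₀ i k, ?_,
    fun k i x hx y hy hxy => ?_⟩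
  · simpa using tendsto_finsetSum Finset.univ fun i _ => hδ i
  have hle : δ i k ≤ ∑ i, δ i k :=
    Finset.single_le_sum (f := fun i => δ i k) (fun j _ => hδ₀ j k) (Finset.mem_univ i)
  have hlog := (le_abs_self _).trans ((hmod i k x hx y hy hxy).trans hle)
  rw [← Real.log_le_log_iff (hpos i x hx) (mul_pos (Real.exp_pos _) (hpos i y hy)),
    Real.log_mul (Real.exp_pos _).ne' (hpos i y hy).ne', Real.log_exp]
  linarith

theorem exists_isSublinear_abs_wordDeriv_le :
    ∃ b : ℕ → ℝ, IsSublinear b ∧ ∀ w : Word N, ∀ x ∈ Icc (0 : ℝ) 1, ∀ y ∈ Icc (0 : ℝ) 1,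
      |wordDeriv Φ w x| ≤ Real.exp (b w.length) * |wordDeriv Φ w y| := by
  obtain ⟨r, hr, hT⟩ := Φ.exists_abs_deriv_le
  obtain ⟨δ, hδ₀, hδ, hmod⟩ := Φ.exists_deriv_modulus hr
  refine ⟨_, .sum_range hδ₀ hδ, fun w x hx y hy => ?_⟩
  induction w with
  | nil => simp [wordDeriv]
  | cons i w ih =>
    have hi := hmod w.length i _ (wordMap_mem_Icc Φ w hx) _ (wordMap_mem_Icc Φ w hy)
      (abs_wordMap_sub_le_pow hT w hx hy)
    simp only [wordDeriv, abs_mul, List.length_cons, Finset.sum_range_succ, Real.exp_add]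
    exact (mul_le_mul hi ih (abs_nonneg _) (by positivity)).trans_eq (by ring)

end IFS

section Sequences

theorem cat_nil (x : SeqSp N) : cat [] x = x := by
  funext k
  simp [cat]

theorem cat_cons (i : Fin N) (w : Word N) (x : SeqSp N) :
    cat (i :: w) x = cat [i] (cat w x) := by
  funext k
  cases k <;> simp [cat]

theorem shift_cat_cons (i : Fin N) (w : Word N) (x : SeqSp N) :
    shift (cat (i :: w) x) = cat w x := by
  funext k
  simp [shift, cat]

theorem cat_apply_of_lt (w : Word N) (x : SeqSp N) {k : ℕ} (hk : k < w.length) :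
    cat w x k = w[k] := by
  simp [cat, hk]

theorem continuous_cat (w : Word N) : Continuous (cat w) := by
  refine continuous_pi fun k => ?_
  by_cases h : k < w.length
  · simpa only [cat, h, dite_true] using continuous_const
  · simpa only [cat, h, dite_false] using continuous_apply _

theorem measurable_cat (w : Word N) : Measurable (cat w) :=
  (continuous_cat w).measurable

theorem measurableSet_cylinder (w : Word N) : MeasurableSet (cylinder w) := by
  simp only [cylinder, Set.ofPred_forall]
  exact .iInter fun i => measurableSet_eq_fun (measurable_pi_apply _) measurable_const

theorem cat_singleton_mem_cylinder_cons {i j : Fin N} {w : Word N} {x : SeqSp N} :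
    cat [j] x ∈ cylinder (i :: w) ↔ j = i ∧ x ∈ cylinder w := by
  simp [cylinder, Fin.forall_fin_succ, cat]

/-- The word formed by the first `m` letters of `x`. -/
def initialWord (x : SeqSp N) (m : ℕ) : Word N :=
  List.ofFn fun i : Fin m => x i

theorem length_initialWord (x : SeqSp N) (m : ℕ) : (initialWord x m).length = m :=
  List.length_ofFn

theorem take_initialWord (x : SeqSp N) {k m : ℕ} (h : k ≤ m) :
    (initialWord x m).take k = initialWord x k :=
  List.ext_getElem (by simp [initialWord, h]) (by simp [initialWord])

theorem initialWord_cat_singleton (i : Fin N) (x : SeqSp N) (m : ℕ) :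
    initialWord (cat [i] x) (m + 1) = i :: initialWord x m := by
  simp [initialWord, List.ofFn_succ, cat]

theorem mem_cylinder_iff {w : Word N} {x : SeqSp N} :
    x ∈ cylinder w ↔ initialWord x w.length = w := by
  simp [cylinder, initialWord, List.ext_get_iff, Fin.forall_iff]

theorem mem_cylinder_initialWord (x : SeqSp N) (m : ℕ) : x ∈ cylinder (initialWord x m) := by
  rw [mem_cylinder_iff, length_initialWord]

end Sequences

section Coding

variable {Φ : C1IFS N} {π : SeqSp N → ℝ}

theorem IsCoding.mem_Icc (hπ : IsCoding Φ π) (x : SeqSp N) : π x ∈ Icc (0 : ℝ) 1 := by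
  simpa [wordMap] using hπ x 0

theorem IsCoding.apply_cat_singleton (hπ : IsCoding Φ π) (i : Fin N) (x : SeqSp N) :
    π (cat [i] x) = Φ.T i (π x) := by
  obtain ⟨r, hr, hT⟩ := Φ.exists_abs_deriv_le
  have hle (m : ℕ) : |π (cat [i] x) - Φ.T i (π x)| ≤ r ^ (m + 1) := by
    obtain ⟨a, ha, hia⟩ := hπ (cat [i] x) (m + 1)
    obtain ⟨b, hb, hxb⟩ := hπ x m
    rw [← initialWord, initialWord_cat_singleton] at hia
    have h := abs_wordMap_sub_le_pow hT (i :: initialWord x m) ha hb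
    rwa [hia, List.length_cons, length_initialWord, wordMap, Function.comp_apply, initialWord,
      hxb] at h
  exact sub_eq_zero.1 (abs_nonpos_iff.1 (ge_of_tendsto' ((tendsto_add_atTop_iff_nat 1).2
    (tendsto_pow_atTop_nhds_zero_of_lt_one hr.1.le hr.2)) hle))

theorem IsCoding.apply_cat (hπ : IsCoding Φ π) (w : Word N) (x : SeqSp N) :
    π (cat w x) = wordMap Φ w (π x) := by
  induction w with
  | nil => rw [cat_nil]; rfl
  | cons i w ih => rw [cat_cons, hπ.apply_cat_singleton, ih]; rfl

end Coding

section Birkhoff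

variable {ψ : SeqSp N → ℝ}

theorem birkhoff_succ (ψ : SeqSp N → ℝ) (m : ℕ) (x : SeqSp N) :
    birkhoff ψ (m + 1) x = ψ x + birkhoff ψ m (shift x) := by
  simp only [birkhoff, Finset.sum_range_succ', Function.iterate_succ_apply,
    Function.iterate_zero_apply, add_comm]

theorem measurable_birkhoff (hψ : Continuous ψ) (m : ℕ) : Measurable (birkhoff ψ m) := by
  have hshift : Continuous (shift : SeqSp N → SeqSp N) :=
    continuous_pi fun k => continuous_apply (k + 1)
  exact (continuous_finsetSum _ fun k _ => hψ.comp (hshift.iterate k)).measurable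

theorem exists_tendsto_zero_abs_sub_le_of_eqOn (hψ : Continuous ψ) :
    ∃ δ : ℕ → ℝ, (∀ k, 0 ≤ δ k) ∧ Tendsto δ atTop (𝓝 0) ∧
      ∀ k (x y : SeqSp N), (∀ j < k, x j = y j) → |ψ x - ψ y| ≤ δ k := by
  let : MetricSpace (SeqSp N) := PiNat.metricSpace (E := fun _ => Fin N)
  obtain ⟨δ, hδ₀, hδ, hmod⟩ := exists_tendsto_zero_abs_sub_le isCompact_univ hψ.continuousOn
    (tendsto_pow_atTop_nhds_zero_of_lt_one (r := (1 / 2 : ℝ)) (by norm_num) (by norm_num))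
  exact ⟨δ, hδ₀, hδ, fun k x y hxy =>
    hmod k x trivial y trivial (PiNat.mem_cylinder_iff_dist_le.1 hxy)⟩

theorem exists_isSublinear_birkhoff_le (hψ : Continuous ψ) :
    ∃ b : ℕ → ℝ, IsSublinear b ∧ ∀ (w : Word N) (x y : SeqSp N),
      birkhoff ψ w.length (cat w x) ≤ b w.length + birkhoff ψ w.length (cat w y) := by
  obtain ⟨δ, hδ₀, hδ, hmod⟩ := exists_tendsto_zero_abs_sub_le_of_eqOn hψ
  refine ⟨fun n => ∑ k ∈ Finset.range n, δ (k + 1),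
    .sum_range (fun k => hδ₀ _) ((tendsto_add_atTop_iff_nat 1).2 hδ), fun w x y => ?_⟩
  induction w with
  | nil => simp [birkhoff]
  | cons i w ih =>
    have hψi := (le_abs_self _).trans (hmod (i :: w).length (cat (i :: w) x) (cat (i :: w) y)
      fun j hj => by rw [cat_apply_of_lt _ _ hj, cat_apply_of_lt _ _ hj])
    rw [List.length_cons] at hψi ⊢
    simp only [birkhoff_succ, shift_cat_cons, Finset.sum_range_succ]
    linarith

end Birkhoff

section Gibbs

variable {ψ : SeqSp N → ℝ} {ν : Measure (SeqSp N)}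

/-- The density `exp (S_{|w|} ψ (w x))` of the Gibbs measure of `ψ` on the cylinder `[w]`, pulled
back along `x ↦ w x`. -/
def cylinderDensity (ψ : SeqSp N → ℝ) (w : Word N) (x : SeqSp N) : ℝ≥0∞ :=
  ENNReal.ofReal (Real.exp (birkhoff ψ w.length (cat w x)))

theorem measurable_cylinderDensity (hψ : Continuous ψ) (w : Word N) :
    Measurable (cylinderDensity ψ w) :=
  ((measurable_birkhoff hψ _).comp (measurable_cat w)).exp.ennreal_ofReal

theorem cylinderDensity_nil (x : SeqSp N) : cylinderDensity ψ [] x = 1 := by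
  simp [cylinderDensity, birkhoff]

theorem cylinderDensity_cons (i : Fin N) (w : Word N) (x : SeqSp N) :
    cylinderDensity ψ (i :: w) x = cylinderDensity ψ [i] (cat w x) * cylinderDensity ψ w x := by
  simp only [cylinderDensity, List.length_cons, List.length_nil, birkhoff_succ, shift_cat_cons,
    ← cat_cons]
  simp [birkhoff, Real.exp_add, ENNReal.ofReal_mul (Real.exp_pos _).le]

theorem ofReal_transfer {f : SeqSp N → ℝ} (hf : ∀ x, 0 ≤ f x) (x : SeqSp N) :
    ENNReal.ofReal (transfer ψ f x) =
      ∑ i, cylinderDensity ψ [i] x * ENNReal.ofReal (f (cat [i] x)) := by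
  rw [transfer, ENNReal.ofReal_sum_of_nonneg fun i _ => mul_nonneg (Real.exp_pos _).le (hf _)]
  simp [cylinderDensity, birkhoff, ENNReal.ofReal_mul (Real.exp_pos _).le]

theorem continuous_transfer (hψ : Continuous ψ) {f : SeqSp N → ℝ} (hf : Continuous f) :
    Continuous (transfer ψ f) :=
  continuous_finsetSum _ fun i _ => (Real.continuous_exp.comp (hψ.comp (continuous_cat [i]))).mul
    (hf.comp (continuous_cat [i]))

theorem lintegral_sum_map_withDensity (hψ : Continuous ψ) {f : SeqSp N → ℝ≥0∞}
    (hf : Measurable f) :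
    ∫⁻ x, f x ∂(∑ i, (ν.withDensity (cylinderDensity ψ [i])).map (cat [i])) =
      ∑ i, ∫⁻ x, cylinderDensity ψ [i] x * f (cat [i] x) ∂ν := by
  rw [lintegral_finsetSum_measure]
  refine Finset.sum_congr rfl fun i _ => ?_
  rw [lintegral_map hf (measurable_cat [i])]
  exact lintegral_withDensity_eq_lintegral_mul _ (measurable_cylinderDensity hψ [i])
    (hf.comp (measurable_cat [i]))

variable [IsFiniteMeasure ν]

theorem IsTransferFixed.lintegral_ofReal_eq (hν : IsTransferFixed ψ ν) (hψ : Continuous ψ)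
    {f : SeqSp N → ℝ} (hf : Continuous f) (hf₀ : ∀ x, 0 ≤ f x) :
    ∫⁻ x, ENNReal.ofReal (f x) ∂ν =
      ∑ i, ∫⁻ x, cylinderDensity ψ [i] x * ENNReal.ofReal (f (cat [i] x)) ∂ν := by
  have hint {g : SeqSp N → ℝ} (hg : Continuous g) : Integrable g ν :=
    hg.integrable_of_hasCompactSupport (.of_compactSpace g)
  have htransfer₀ (x) : 0 ≤ transfer ψ f x :=
    Finset.sum_nonneg fun i _ => mul_nonneg (Real.exp_pos _).le (hf₀ _)
  rw [← ofReal_integral_eq_lintegral_ofReal (hint hf) (.of_forall hf₀), ← hν f hf,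
    ofReal_integral_eq_lintegral_ofReal (hint (continuous_transfer hψ hf)) (.of_forall htransfer₀),
    ← lintegral_finsetSum _ fun i _ => (measurable_cylinderDensity hψ [i]).fun_mul
      (hf.measurable.fun_comp (measurable_cat [i])).ennreal_ofReal]
  simp only [ofReal_transfer hf₀]

theorem IsTransferFixed.eq_sum_map_withDensity (hν : IsTransferFixed ψ ν) (hψ : Continuous ψ) :
    ν = ∑ i, (ν.withDensity (cylinderDensity ψ [i])).map (cat [i]) := by
  refine ext_of_forall_lintegral_eq_of_IsFiniteMeasure fun g => ?_
  rw [lintegral_sum_map_withDensity hψ (by fun_prop)]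
  simpa only [Function.comp_apply, ENNReal.ofReal_coe_nnreal] using hν.lintegral_ofReal_eq hψ
    (NNReal.continuous_coe.comp g.continuous) fun x => (g x).coe_nonneg

theorem IsTransferFixed.setLIntegral_cylinder_cons (hν : IsTransferFixed ψ ν)
    (hψ : Continuous ψ) (i : Fin N) (w : Word N) {f : SeqSp N → ℝ≥0∞} (hf : Measurable f) :
    ∫⁻ x in cylinder (i :: w), f x ∂ν =
      ∫⁻ x in cylinder w, cylinderDensity ψ [i] x * f (cat [i] x) ∂ν := by
  have hcyl (j : Fin N) (x : SeqSp N) : (cylinder (i :: w)).indicator f (cat [j] x) =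
      if j = i then (cylinder w).indicator (fun x => f (cat [i] x)) x else 0 := by
    by_cases hj : j = i <;> simp [indicator, cat_singleton_mem_cylinder_cons, hj]
  rw [← lintegral_indicator (measurableSet_cylinder _),
    ← lintegral_indicator (measurableSet_cylinder _)]
  conv_lhs => rw [hν.eq_sum_map_withDensity hψ]
  rw [lintegral_sum_map_withDensity hψ (hf.indicator (measurableSet_cylinder _)),
    Finset.sum_eq_single_of_mem i (Finset.mem_univ i) fun j _ hj => by simp [hcyl, hj]]
  simp only [hcyl, if_true, indicator_apply, mul_ite, mul_zero]

theorem IsTransferFixed.setLIntegral_cylinder (hν : IsTransferFixed ψ ν) (hψ : Continuous ψ)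
    (w : Word N) {f : SeqSp N → ℝ≥0∞} (hf : Measurable f) :
    ∫⁻ x in cylinder w, f x ∂ν = ∫⁻ x, cylinderDensity ψ w x * f (cat w x) ∂ν := by
  induction w generalizing f with
  | nil => simp [cylinder, cylinderDensity_nil, cat_nil]
  | cons i w ih =>
    rw [hν.setLIntegral_cylinder_cons hψ i w hf,
      ih ((measurable_cylinderDensity hψ [i]).fun_mul (hf.fun_comp (measurable_cat [i])))]
    simp only [cylinderDensity_cons i w, cat_cons i w, mul_assoc, mul_left_comm]

theorem IsTransferFixed.restrict_cylinder (hν : IsTransferFixed ψ ν) (hψ : Continuous ψ)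
    (w : Word N) :
    ν.restrict (cylinder w) = (ν.withDensity (cylinderDensity ψ w)).map (cat w) := by
  refine Measure.ext_of_lintegral _ fun f hf => ?_
  rw [hν.setLIntegral_cylinder hψ w hf, lintegral_map hf (measurable_cat w)]
  exact (lintegral_withDensity_eq_lintegral_mul _ (measurable_cylinderDensity hψ w)
    (hf.comp (measurable_cat w))).symm

variable {w : Word N} {x₀ : SeqSp N} {C : ℝ≥0∞}

theorem IsTransferFixed.restrict_cylinder_le (hν : IsTransferFixed ψ ν) (hψ : Continuous ψ)
    (hC : ∀ x, cylinderDensity ψ w x ≤ C * cylinderDensity ψ w x₀) :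
    ν.restrict (cylinder w) ≤ C • cylinderDensity ψ w x₀ • ν.map (cat w) := by
  rw [hν.restrict_cylinder hψ, smul_smul, ← Measure.map_smul, ← withDensity_const]
  exact Measure.map_mono (withDensity_mono (.of_forall hC)) (measurable_cat w)

theorem IsTransferFixed.le_restrict_cylinder (hν : IsTransferFixed ψ ν) (hψ : Continuous ψ)
    (hC : ∀ x, cylinderDensity ψ w x₀ ≤ C * cylinderDensity ψ w x) :
    cylinderDensity ψ w x₀ • ν.map (cat w) ≤ C • ν.restrict (cylinder w) := by
  rw [hν.restrict_cylinder hψ, ← Measure.map_smul, ← Measure.map_smul, ← withDensity_const,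
    ← withDensity_smul _ (measurable_cylinderDensity hψ w)]
  exact Measure.map_mono (withDensity_mono (.of_forall hC)) (measurable_cat w)

end Gibbs

section Stopping

variable {Φ : C1IFS N} {s r c D : ℝ} {k : ℕ} {v w : Word N}

/-- The word `w` is the shortest of its prefixes `v` for which `|T_v'(0)| ≤ s`. -/
def IsStopped (Φ : C1IFS N) (s : ℝ) (w : Word N) : Prop :=
  |wordDeriv Φ w 0| ≤ s ∧ ∀ m < w.length, s < |wordDeriv Φ (w.take m) 0|

theorem IsStopped.length_le (hw : IsStopped Φ s w)
    (hr : ∀ i, ∀ x ∈ Icc (0 : ℝ) 1, |Φ.T' i x| ≤ r) (hk : r ^ k ≤ s) : w.length ≤ k := by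
  by_contra! hlt
  have h := abs_wordDeriv_le_pow hr (w.take k) (left_mem_Icc.2 zero_le_one)
  rw [List.length_take_of_le hlt.le] at h
  exact (hw.2 k hlt).not_ge (h.trans hk)

theorem exists_isStopped_mem_cylinder (hr : ∀ i, ∀ x ∈ Icc (0 : ℝ) 1, |Φ.T' i x| ≤ r)
    (hk : r ^ k ≤ s) (x : SeqSp N) : ∃ w, IsStopped Φ s w ∧ x ∈ cylinder w := by
  have hsmall : ∃ m, |wordDeriv Φ (initialWord x m) 0| ≤ s := by
    have h := abs_wordDeriv_le_pow hr (initialWord x k) (left_mem_Icc.2 zero_le_one)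
    rw [length_initialWord] at h
    exact ⟨k, h.trans hk⟩
  refine ⟨initialWord x (Nat.find hsmall), ⟨Nat.find_spec hsmall, fun m hm => ?_⟩,
    mem_cylinder_initialWord x _⟩
  rw [length_initialWord] at hm
  rw [take_initialWord x hm.le]
  exact not_le.1 (Nat.find_min hsmall hm)

theorem IsStopped.length_le_of_mem_cylinder (hv : IsStopped Φ s v) (hw : IsStopped Φ s w)
    {x : SeqSp N} (hxv : x ∈ cylinder v) (hxw : x ∈ cylinder w) : w.length ≤ v.length := by
  by_contra! hlt
  have htake : w.take v.length = v := by
    rw [← mem_cylinder_iff.1 hxw, take_initialWord x hlt.le, mem_cylinder_iff.1 hxv]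
  have hlt' := hw.2 v.length hlt
  rw [htake] at hlt'
  exact hlt'.not_ge hv.1

theorem pairwiseDisjoint_cylinder_of_isStopped :
    {w | IsStopped Φ s w}.PairwiseDisjoint cylinder := by
  refine fun v hv w hw hne => disjoint_left.2 fun x hxv hxw => hne ?_
  have hlen := (IsStopped.length_le_of_mem_cylinder hw hv hxw hxv).antisymm
    (IsStopped.length_le_of_mem_cylinder hv hw hxv hxw)
  rw [← mem_cylinder_iff.1 hxv, hlen, mem_cylinder_iff.1 hxw]

theorem exists_finset_isStopped (hr : ∀ i, ∀ x ∈ Icc (0 : ℝ) 1, |Φ.T' i x| ≤ r)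
    (hk : r ^ k ≤ s) : ∃ W : Finset (Word N), (∀ w ∈ W, IsStopped Φ s w ∧ w.length ≤ k) ∧
      (W : Set (Word N)).PairwiseDisjoint cylinder ∧ ∀ x : SeqSp N, ∃ w ∈ W, x ∈ cylinder w := by
  have hfin : {w | IsStopped Φ s w}.Finite :=
    (List.finite_length_le (Fin N) k).subset fun _ hw => hw.length_le hr hk
  obtain ⟨W, hW⟩ := hfin.exists_finset
  refine ⟨W, fun w hw => ⟨(hW w).1 hw, ((hW w).1 hw).length_le hr hk⟩,
    pairwiseDisjoint_cylinder_of_isStopped.subset fun w hw => (hW w).1 hw, fun x => ?_⟩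
  obtain ⟨w, hw, hxw⟩ := exists_isStopped_mem_cylinder hr hk x
  exact ⟨w, (hW w).2 hw, hxw⟩

/-- The maps `T_w` with `|w| ≤ k` have distortion at most `exp D` on `[0,1]`. -/
def HasDistortion (Φ : C1IFS N) (k : ℕ) (D : ℝ) : Prop :=
  ∀ w : Word N, w.length ≤ k → ∀ x ∈ Icc (0 : ℝ) 1, ∀ y ∈ Icc (0 : ℝ) 1,
    |wordDeriv Φ w x| ≤ Real.exp D * |wordDeriv Φ w y|

theorem IsStopped.abs_wordMap_sub_le (hw : IsStopped Φ s w) (hk : w.length ≤ k)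
    (hD : HasDistortion Φ k D) {x y : ℝ} (hx : x ∈ Icc (0 : ℝ) 1) (hy : y ∈ Icc (0 : ℝ) 1) :
    |wordMap Φ w x - wordMap Φ w y| ≤ Real.exp D * s * |x - y| := by
  obtain ⟨z, hz, h⟩ := exists_wordMap_sub_eq Φ w hx hy
  rw [h, abs_mul]
  gcongr
  exact (hD w hk z hz 0 (left_mem_Icc.2 zero_le_one)).trans (by gcongr; exact hw.1)

theorem IsStopped.mul_le_abs_wordDeriv (hw : IsStopped Φ s w) (hk : w.length ≤ k)
    (hD : HasDistortion Φ k D) (hD₀ : 0 ≤ D) (hs₀ : 0 ≤ s) (hs : s ≤ 1) (hc : c ∈ Ioo (0 : ℝ) 1)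
    (hT : ∀ i, ∀ x ∈ Icc (0 : ℝ) 1, c ≤ |Φ.T' i x|) :
    c * s ≤ Real.exp D * |wordDeriv Φ w 0| := by
  rcases w.eq_nil_or_concat' with rfl | ⟨v, i, rfl⟩
  · simpa [wordDeriv] using
      (mul_le_one₀ hc.2.le hs₀ hs).trans (Real.one_le_exp hD₀)
  · have h₀ : (0 : ℝ) ∈ Icc (0 : ℝ) 1 := left_mem_Icc.2 zero_le_one
    have hv : s ≤ Real.exp D * |wordDeriv Φ v (Φ.T i 0)| := by
      have hlt := hw.2 v.length (by simp)
      rw [List.take_left] at hlt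
      exact hlt.le.trans (hD v (by rw [List.length_append] at hk; lia) 0 h₀ _ (Φ.maps_into i h₀))
    calc c * s ≤ |Φ.T' i 0| * (Real.exp D * |wordDeriv Φ v (Φ.T i 0)|) :=
          mul_le_mul (hT i 0 h₀) hv hs₀ (abs_nonneg _)
      _ = Real.exp D * |wordDeriv Φ (v ++ [i]) 0| := by
          simp only [wordDeriv_append, wordDeriv, wordMap, abs_mul, Function.comp_apply, id_eq,
            mul_one]
          ring

theorem IsStopped.le_abs_wordMap_sub (hw : IsStopped Φ s w) (hk : w.length ≤ k)
    (hD : HasDistortion Φ k D) (hD₀ : 0 ≤ D) (hs₀ : 0 ≤ s) (hs : s ≤ 1) (hc : c ∈ Ioo (0 : ℝ) 1)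
    (hT : ∀ i, ∀ x ∈ Icc (0 : ℝ) 1, c ≤ |Φ.T' i x|) {x y : ℝ} (hx : x ∈ Icc (0 : ℝ) 1)
    (hy : y ∈ Icc (0 : ℝ) 1) :
    c * s * |x - y| ≤ Real.exp (2 * D) * |wordMap Φ w x - wordMap Φ w y| := by
  obtain ⟨z, hz, h⟩ := exists_wordMap_sub_eq Φ w hx hy
  have hderiv : c * s ≤ Real.exp (2 * D) * |wordDeriv Φ w z| :=
    calc c * s ≤ Real.exp D * |wordDeriv Φ w 0| :=
          hw.mul_le_abs_wordDeriv hk hD hD₀ hs₀ hs hc hT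
      _ ≤ Real.exp D * (Real.exp D * |wordDeriv Φ w z|) := by
          gcongr
          exact hD w hk 0 (left_mem_Icc.2 zero_le_one) z hz
      _ = Real.exp (2 * D) * |wordDeriv Φ w z| := by rw [two_mul, Real.exp_add, mul_assoc]
  rw [h, abs_mul, ← mul_assoc]
  gcongr

end Stopping

section Partition

theorem sum_restrict_eq_self {α ι : Type*} [MeasurableSpace α] {μ : Measure α} {s : Finset ι}
    {A : ι → Set α} (hA : ∀ i, MeasurableSet (A i)) (hdisj : (s : Set ι).PairwiseDisjoint A)
    (hcover : ∀ x, ∃ i ∈ s, x ∈ A i) : ∑ i ∈ s, μ.restrict (A i) = μ := by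
  have huniv : ⋃ i ∈ s, A i = univ := eq_univ_of_forall fun x => by simpa using hcover x
  refine Measure.ext fun B hB => ?_
  simp only [Measure.finsetSum_apply, Measure.restrict_apply hB]
  rw [← measure_biUnion_finset (hdisj.mono fun _ => inter_subset_right)
    fun i _ => hB.inter (hA i), ← inter_iUnion₂, huniv, inter_univ]

variable {ψ : SeqSp N → ℝ} {ν : Measure (SeqSp N)} [IsFiniteMeasure ν] {W : Finset (Word N)}
  {C : ℝ≥0∞} {E : Type*} [MeasurableSpace E] {X : SeqSp N → E}

theorem IsTransferFixed.map_le_smul_sum_map (hν : IsTransferFixed ψ ν) (hψ : Continuous ψ)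
    (hdisj : (W : Set (Word N)).PairwiseDisjoint cylinder)
    (hcover : ∀ x : SeqSp N, ∃ w ∈ W, x ∈ cylinder w)
    (hC : ∀ w ∈ W, ∀ x y, cylinderDensity ψ w x ≤ C * cylinderDensity ψ w y) (x₀ : SeqSp N)
    (hX : Measurable X) :
    ν.map X ≤ C • ∑ w ∈ W, cylinderDensity ψ w x₀ • ν.map (X ∘ cat w) := by
  have hle : ν ≤ ∑ w ∈ W, C • cylinderDensity ψ w x₀ • ν.map (cat w) :=
    calc ν = ∑ w ∈ W, ν.restrict (cylinder w) :=
          (sum_restrict_eq_self measurableSet_cylinder hdisj hcover).symm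
      _ ≤ _ := Finset.sum_le_sum fun w hw => hν.restrict_cylinder_le hψ fun x => hC w hw x x₀
  rw [← Finset.smul_sum] at hle
  simpa only [Measure.map_smul, Measure.map_finset_sum hX.aemeasurable,
    Measure.map_map hX (measurable_cat _)] using Measure.map_mono hle hX

theorem IsTransferFixed.sum_map_le_smul_map (hν : IsTransferFixed ψ ν) (hψ : Continuous ψ)
    (hdisj : (W : Set (Word N)).PairwiseDisjoint cylinder)
    (hcover : ∀ x : SeqSp N, ∃ w ∈ W, x ∈ cylinder w)
    (hC : ∀ w ∈ W, ∀ x y, cylinderDensity ψ w x ≤ C * cylinderDensity ψ w y) (x₀ : SeqSp N)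
    (hX : Measurable X) :
    ∑ w ∈ W, cylinderDensity ψ w x₀ • ν.map (X ∘ cat w) ≤ C • ν.map X := by
  have hle : ∑ w ∈ W, cylinderDensity ψ w x₀ • ν.map (cat w) ≤ C • ν :=
    calc ∑ w ∈ W, cylinderDensity ψ w x₀ • ν.map (cat w)
        ≤ ∑ w ∈ W, C • ν.restrict (cylinder w) :=
          Finset.sum_le_sum fun w hw => hν.le_restrict_cylinder hψ fun x => hC w hw x₀ x
      _ = C • ν := by
          rw [← Finset.smul_sum, sum_restrict_eq_self measurableSet_cylinder hdisj hcover]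
  simpa only [Measure.map_smul, Measure.map_finset_sum hX.aemeasurable,
    Measure.map_map hX (measurable_cat _)] using Measure.map_mono hle hX

end Partition

section Supermultiplicative

variable {Φ : C1IFS N} {π ψ : SeqSp N → ℝ} {ν : Measure (SeqSp N)} {q r c D : ℝ} {k n : ℕ}

theorem IsStopped.two_pow_mul_abs_apply_cat_sub_le {w : Word N}
    (hw : IsStopped Φ (2 ^ n)⁻¹ w) (hk : w.length ≤ k) (hD : HasDistortion Φ k D)
    (hπ : IsCoding Φ π) (x y : SeqSp N) :
    2 ^ n * |π (cat w x) - π (cat w y)| ≤ Real.exp D := by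
  have hxy : |π x - π y| ≤ 1 := by
    simpa using abs_sub_le_of_le_of_le (hπ.mem_Icc x).1 (hπ.mem_Icc x).2 (hπ.mem_Icc y).1
      (hπ.mem_Icc y).2
  rw [hπ.apply_cat, hπ.apply_cat]
  calc 2 ^ n * |wordMap Φ w (π x) - wordMap Φ w (π y)|
      ≤ 2 ^ n * (Real.exp D * (2 ^ n)⁻¹ * |π x - π y|) := by
        gcongr
        exact hw.abs_wordMap_sub_le hk hD (hπ.mem_Icc x) (hπ.mem_Icc y)
    _ = Real.exp D * |π x - π y| := by field_simp
    _ ≤ Real.exp D := mul_le_of_le_one_right (Real.exp_pos D).le hxy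

theorem IsStopped.abs_sub_le_mul_abs_apply_cat_sub {w : Word N}
    (hw : IsStopped Φ (2 ^ n)⁻¹ w) (hk : w.length ≤ k) (hD : HasDistortion Φ k D) (hD₀ : 0 ≤ D)
    (hc : c ∈ Ioo (0 : ℝ) 1) (hT : ∀ i, ∀ x ∈ Icc (0 : ℝ) 1, c ≤ |Φ.T' i x|)
    (hπ : IsCoding Φ π) (x y : SeqSp N) :
    |π x - π y| ≤ Real.exp (2 * D) / c * 2 ^ n * |π (cat w x) - π (cat w y)| := by
  have h := hw.le_abs_wordMap_sub hk hD hD₀ (by positivity)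
    (inv_le_one_of_one_le₀ (one_le_pow₀ one_le_two)) hc hT (hπ.mem_Icc x) (hπ.mem_Icc y)
  have hc₀ := hc.1
  rw [hπ.apply_cat, hπ.apply_cat]
  calc |π x - π y| = c⁻¹ * 2 ^ n * (c * (2 ^ n)⁻¹ * |π x - π y|) := by field_simp
    _ ≤ c⁻¹ * 2 ^ n * (Real.exp (2 * D) * |wordMap Φ w (π x) - wordMap Φ w (π y)|) := by gcongr
    _ = _ := by ring

theorem IsTransferFixed.dyadicSum_map_mul_le [IsProbabilityMeasure ν] (hν : IsTransferFixed ψ ν)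
    (hψ : Continuous ψ) (hπ : IsCoding Φ π) (hπm : Measurable π) {C : ℝ≥0∞} {K : ℕ}
    (hr : ∀ i, ∀ x ∈ Icc (0 : ℝ) 1, |Φ.T' i x| ≤ r) (hrk : r ^ k ≤ (2 ^ n)⁻¹)
    (hc : c ∈ Ioo (0 : ℝ) 1) (hcT : ∀ i, ∀ x ∈ Icc (0 : ℝ) 1, c ≤ |Φ.T' i x|)
    (hD : HasDistortion Φ k D) (hD₀ : 0 ≤ D)
    (hC : ∀ w : Word N, w.length ≤ k → ∀ x y, cylinderDensity ψ w x ≤ C * cylinderDensity ψ w y)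
    (hK : Real.exp (2 * D) / c ≤ K) (m : ℕ) (hq0 : 0 < q) (hq1 : q ≤ 1) :
    dyadicSum (ν.map π) q n * dyadicSum (ν.map π) q m ≤
      (2 * K + 1) ^ 3 * (C ^ q) ^ 2 * dyadicSum (ν.map π) q (n + m) := by
  obtain ⟨x₀⟩ : Nonempty (SeqSp N) := ν.nonempty_of_neZero
  obtain ⟨W, hW, hdisj, hcover⟩ := exists_finset_isStopped hr hrk
  have hCW (w) (hw : w ∈ W) := hC w (hW w hw).2
  have hDK : Real.exp D ≤ K := by
    refine le_trans ?_ hK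
    rw [le_div_iff₀ hc.1]
    exact (mul_le_of_le_one_right (Real.exp_pos D).le hc.2.le).trans
      (Real.exp_le_exp.2 (by linarith))
  refine Lq.dyadicSum_map_mul_le hπm (fun w => hπm.comp (measurable_cat w))
    (fun w _ => ENNReal.ofReal_ne_top) (hν.map_le_smul_sum_map hψ hdisj hcover hCW x₀ hπm)
    (hν.sum_map_le_smul_map hψ hdisj hcover hCW x₀ hπm) (fun w hw x y => ?_) (fun w hw x y => ?_)
    m hq0 hq1
  · grw [(hW w hw).1.abs_sub_le_mul_abs_apply_cat_sub (hW w hw).2 hD hD₀ hc hcT hπ x y, hK]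
    rfl
  · exact ((hW w hw).1.two_pow_mul_abs_apply_cat_sub_le (hW w hw).2 hD hπ x y).trans hDK

theorem two_mul_natCeil_add_one_le {x : ℝ} (hx : 1 ≤ x) :
    (2 * (⌈x⌉₊ : ℝ≥0∞) + 1) ≤ ENNReal.ofReal (5 * x) := by
  have hceil := (Nat.ceil_lt_add_one (zero_le_one.trans hx)).le
  calc (2 * (⌈x⌉₊ : ℝ≥0∞) + 1) = ENNReal.ofReal (2 * ⌈x⌉₊ + 1) := by
        rw [ENNReal.ofReal_add (by positivity) zero_le_one, ENNReal.ofReal_mul zero_le_two]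
        simp
    _ ≤ ENNReal.ofReal (5 * x) := ENNReal.ofReal_le_ofReal (by linarith)

theorem natCeil_pow_mul_rpow_le_ofReal_exp {H : ℝ} (hc : c ∈ Ioo (0 : ℝ) 1) (hD₀ : 0 ≤ D)
    (hH : 0 ≤ H) (hq1 : q ≤ 1) :
    (2 * (⌈Real.exp (2 * D) / c⌉₊ : ℝ≥0∞) + 1) ^ 3 * (ENNReal.ofReal (Real.exp H) ^ q) ^ 2 ≤
      ENNReal.ofReal (Real.exp (6 * D + 2 * H + 3 * Real.log (5 / c))) := by
  have hc₀ := hc.1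
  have hone : 1 ≤ Real.exp (2 * D) / c :=
    (one_le_div hc₀).2 (hc.2.le.trans (Real.one_le_exp (by positivity)))
  have hrpow : ENNReal.ofReal (Real.exp H) ^ q ≤ ENNReal.ofReal (Real.exp H) := by
    simpa using ENNReal.rpow_le_rpow_of_exponent_le
      (ENNReal.one_le_ofReal.2 (Real.one_le_exp hH)) hq1
  grw [two_mul_natCeil_add_one_le hone, hrpow]
  rw [← ENNReal.ofReal_pow (by positivity), ← ENNReal.ofReal_pow (by positivity),
    ← ENNReal.ofReal_mul (by positivity)]
  refine ENNReal.ofReal_le_ofReal (le_of_eq ?_)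
  have hlog : Real.exp (Real.log (5 / c)) = 5 / c := Real.exp_log (by positivity)
  calc (5 * (Real.exp (2 * D) / c)) ^ 3 * Real.exp H ^ 2
      = Real.exp (2 * D) ^ 3 * Real.exp H ^ 2 * Real.exp (Real.log (5 / c)) ^ 3 := by
        rw [hlog]; ring
    _ = _ := by
        simp only [← Real.exp_nat_mul, ← Real.exp_add]
        congr 1
        push_cast
        ring

theorem IsTransferFixed.exists_isLittleO_dyadicSum_mul_le [IsProbabilityMeasure ν]
    (hν : IsTransferFixed ψ ν) (hψ : Continuous ψ) (hπ : IsCoding Φ π) (hπm : Measurable π)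
    (hq0 : 0 < q) (hq1 : q ≤ 1) :
    ∃ e : ℕ → ℝ, e =o[atTop] (fun n : ℕ => (n : ℝ)) ∧ ∀ n m,
      dyadicSum (ν.map π) q n * dyadicSum (ν.map π) q m ≤
        ENNReal.ofReal (Real.exp (e n)) * dyadicSum (ν.map π) q (n + m) := by
  obtain ⟨r, hr, hrT⟩ := Φ.exists_abs_deriv_le
  obtain ⟨c, hc, hcT⟩ := Φ.exists_le_abs_deriv
  obtain ⟨D, hD, hDT⟩ := exists_isSublinear_abs_wordDeriv_le Φ
  obtain ⟨H, hH, hHψ⟩ := exists_isSublinear_birkhoff_le hψ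
  obtain ⟨A, hA⟩ := exists_pow_lt_of_lt_one (inv_pos.2 (zero_lt_two (α := ℝ))) hr.2
  have hA₀ : 0 < A := Nat.pos_of_ne_zero fun h => by norm_num [h] at hA
  have hpow (n : ℕ) : r ^ (A * n) ≤ (2 ^ n)⁻¹ := by
    rw [pow_mul, ← inv_pow]
    exact pow_le_pow_left₀ (pow_nonneg hr.1.le A) hA.le n
  have hdist (k : ℕ) : HasDistortion Φ k (D k) := fun w hw x hx y hy =>
    (hDT w x hx y hy).trans (by gcongr; exact hD.mono hw)
  have hdens (k : ℕ) (w : Word N) (hw : w.length ≤ k) (x y : SeqSp N) :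
      cylinderDensity ψ w x ≤ ENNReal.ofReal (Real.exp (H k)) * cylinderDensity ψ w y := by
    rw [cylinderDensity, cylinderDensity, ← ENNReal.ofReal_mul (Real.exp_pos _).le,
      ← Real.exp_add]
    gcongr
    exact (hHψ w x y).trans (by gcongr; exact hH.mono hw)
  refine ⟨fun n => 6 * D (A * n) + 2 * H (A * n) + 3 * Real.log (5 / c), ?_, fun n m => ?_⟩
  · exact (((hD.isLittleO_comp_mul hA₀).const_mul_left 6).add
      ((hH.isLittleO_comp_mul hA₀).const_mul_left 2)).add
      (isLittleO_const_left.2 (.inr (tendsto_norm_atTop_atTop.comp tendsto_natCast_atTop_atTop)))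
  · refine (hν.dyadicSum_map_mul_le hψ hπ hπm hrT (hpow n) hc hcT (hdist _) (hD.nonneg _)
      (hdens _) (Nat.le_ceil _) m hq0 hq1).trans ?_
    gcongr
    exact natCeil_pow_mul_rpow_le_ofReal_exp hc (hD.nonneg _) (hH.nonneg _) hq1

end Supermultiplicative

end Symb

theorem Lq_spectrum_exists_as_limit_general {N : ℕ} {Φ : C1IFS N} {π ψ : SeqSp N → ℝ}
    (hπ : IsCoding Φ π) (hπm : Measurable π) (hψ : Continuous ψ) {ν : Measure (SeqSp N)}
    [IsProbabilityMeasure ν] (hν : IsTransferFixed ψ ν) {q : ℝ} (hq : q ∈ Ioc (0 : ℝ) 1) :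
    ∃ L, Tendsto (fun n => Lq.betaN (ν.map π) n q) atTop (𝓝 L) := by
  have : IsProbabilityMeasure (ν.map π) := Measure.isProbabilityMeasure_map hπm.aemeasurable
  have hmem : ∀ᵐ x ∂ν.map π, x ∈ Icc (0 : ℝ) 1 :=
    (ae_map_iff hπm.aemeasurable measurableSet_Icc).2 (.of_forall hπ.mem_Icc)
  obtain ⟨e, he, hsuper⟩ := hν.exists_isLittleO_dyadicSum_mul_le hψ hπ hπm hq.1 hq.2
  exact Lq.exists_tendsto_betaN hmem hq.1 hq.2 he hsuper

/-- **Proposition 5.10.**  For a weak `ψ`-Gibbs measure `ρ` with respect to a non-trivial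
`C¹`-IFS (with or without overlaps), the `L^q`-spectrum `β_ρ(q)` exists as a limit for
every `q ∈ (0,1]`. -/
theorem Lq_spectrum_exists_as_limit
    {N : ℕ} (Φ : C1IFS N) (hΦ : Φ.NontrivialIFS)
    (π : SeqSp N → ℝ) (hπ : IsCoding Φ π) (hπc : Continuous π)
    (ψ : SeqSp N → ℝ) (hψc : Continuous ψ) (hψn : Normalized ψ)
    (ν : Measure (SeqSp N)) [IsProbabilityMeasure ν] (hν : IsTransferFixed ψ ν)
    (ρ : Measure ℝ) (hρ : ρ = Measure.map π ν)
    (q : ℝ) (hq : q ∈ Set.Ioc (0:ℝ) 1) :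
    ∃ L : ℝ, Filter.Tendsto (fun n => Lq.betaN ρ n q) Filter.atTop (nhds L) := by
  subst hρ
  exact Lq_spectrum_exists_as_limit_general hπ hπc.measurable hψc hν hq
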